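/- arXiv:1208.1413 — 4 statements merged into one kernel-verified Lean document; each statement's English description precedes it below -/
import Mathlib

section
/- Let β ∈ (1,√3] ∪ (2,√5] with β ∉ ℤ, let A = {0,1,…,⌊β⌋}, l = −β⌊β⌋/(β²−1), r = ⌊β⌋/(β²−1), and J = [l,r]. Define D : J → A by D(x) = 0 for x ∈ [−1/(2β), r], D(x) = ⌊β⌋ for x ∈ [l, −(⌊β⌋−1)/β − 1/(2β)), and D(x) = 1 otherwise on J. Then for every x ∈ J the digit a = D(x) satisfies: (i) −βx − a ∈ J, and (ii) |−βx − a| ≤ |−βx − b| for every b ∈ A with −βx − b ∈ J. -/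
/-!
The map `x ↦ -β * x` sends `J = [l, r]` onto `[l, m + r]`. When `l ≤ -1/2` and `1/2 ≤ r`,
subtracting from `y ∈ [l, m + r]` the digit nearest to `y` never leaves `J`: between `-1/2` and
`m + 1/2` the remainder has modulus at most `1/2`, and beyond these points the nearest digit is the
extreme one. The bound `1/2 ≤ r` amounts to `β ^ 2 ≤ 2 * m + 1`, whence the endpoints
`√3 = √(2 * 1 + 1)` and `√5 = √(2 * 2 + 1)`. The thresholds defining `D` are midpoints between
consecutive digits, pulled back along `x ↦ -β * x`.
-/

section OrderedField

variable {K : Type*} [Field K] [LinearOrder K] [IsStrictOrderedRing K]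

/-- The integer `a` is an element of the digit set `{0, …, m}` at minimal distance from `y`; ties
are allowed, so that there may be two such digits. -/
def IsNearestDigit (m : ℤ) (y : K) (a : ℤ) : Prop :=
  a ∈ Set.Icc 0 m ∧ ∀ b ∈ Set.Icc 0 m, |y - a| ≤ |y - b|

theorem abs_sub_le_abs_sub_iff_le_midpoint {y a b : K} (hab : a < b) :
    |y - a| ≤ |y - b| ↔ y ≤ (a + b) / 2 := by
  rw [← sq_le_sq]
  constructor <;> intro h <;> nlinarith

theorem abs_sub_le_abs_sub_iff_midpoint_le {y a b : K} (hba : b < a) :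
    |y - a| ≤ |y - b| ↔ (b + a) / 2 ≤ y := by
  rw [← sq_le_sq]
  constructor <;> intro h <;> nlinarith

section NearestDigit

variable {m a : ℤ} {y l r : K}

theorem isNearestDigit_iff :
    IsNearestDigit m y a ↔
      a ∈ Set.Icc 0 m ∧ (0 < a → (a : K) - 1 / 2 ≤ y) ∧ (a < m → y ≤ a + 1 / 2) := by
  refine and_congr_right fun ⟨ha0, ham⟩ ↦ ⟨fun hmin ↦ ⟨fun ha ↦ ?_, fun ha ↦ ?_⟩, ?_⟩
  · have hpred := hmin (a - 1) ⟨by lia, by lia⟩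
    rw [abs_sub_le_abs_sub_iff_midpoint_le (by push_cast; linarith)] at hpred
    push_cast at hpred
    linarith
  · have hsucc := hmin (a + 1) ⟨by lia, by lia⟩
    rw [abs_sub_le_abs_sub_iff_le_midpoint (by push_cast; linarith)] at hsucc
    push_cast at hsucc
    linarith
  · rintro ⟨hlower, hupper⟩ b ⟨hb0, hbm⟩
    rcases lt_trichotomy a b with hab | rfl | hba
    · have hab' : (a : K) + 1 ≤ b := mod_cast hab
      rw [abs_sub_le_abs_sub_iff_le_midpoint (by linarith)]
      linarith [hupper (by lia)]
    · rfl
    · have hba' : (b : K) + 1 ≤ a := mod_cast hba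
      rw [abs_sub_le_abs_sub_iff_midpoint_le (by linarith)]
      linarith [hlower (by lia)]

theorem IsNearestDigit.sub_mem_Icc (h : IsNearestDigit m y a) (hl : l ≤ -1 / 2) (hr : 1 / 2 ≤ r)
    (hy : y ∈ Set.Icc l (m + r)) : y - a ∈ Set.Icc l r := by
  obtain ⟨⟨ha0, ham⟩, hlower, hupper⟩ := isNearestDigit_iff.1 h
  constructor
  · rcases ha0.eq_or_lt with rfl | ha
    · simpa using hy.1
    · linarith [hlower ha]
  · rcases ham.eq_or_lt with rfl | ha
    · linarith [hy.2]
    · linarith [hupper ha]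

theorem isNearestDigit_zero (hm : 0 ≤ m) (hy : y ≤ 1 / 2) : IsNearestDigit m y 0 :=
  isNearestDigit_iff.2 ⟨⟨le_rfl, hm⟩, fun h ↦ absurd h (lt_irrefl 0), fun _ ↦ by simpa using hy⟩

theorem isNearestDigit_last (hm : 0 ≤ m) (hy : (m : K) - 1 / 2 ≤ y) : IsNearestDigit m y m :=
  isNearestDigit_iff.2 ⟨⟨hm, le_rfl⟩, fun _ ↦ hy, fun h ↦ absurd h (lt_irrefl m)⟩

theorem isNearestDigit_of_abs_sub_le (ha : a ∈ Set.Icc 0 m) (hy : |y - a| ≤ 1 / 2) :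
    IsNearestDigit m y a := by
  obtain ⟨hlower, hupper⟩ := abs_le.1 hy
  exact isNearestDigit_iff.2 ⟨ha, fun _ ↦ by linarith, fun _ ↦ by linarith⟩

end NearestDigit

section Interval

variable {β m l r x : K}

theorem neg_mul_mem_Icc (hβ : 1 < β) (hl : l = -β * m / (β ^ 2 - 1)) (hr : r = m / (β ^ 2 - 1))
    (hx : x ∈ Set.Icc l r) : -β * x ∈ Set.Icc l (m + r) := by
  have hden : β ^ 2 - 1 ≠ 0 := by nlinarith
  have hleft : -β * r = l := by rw [hl, hr, mul_div_assoc]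
  have hright : -β * l = m + r := by
    rw [hl, hr]
    field_simp
    ring
  have hβneg : -β ≤ 0 := by linarith
  constructor
  · rw [← hleft]
    exact mul_le_mul_of_nonpos_left hx.2 hβneg
  · rw [← hright]
    exact mul_le_mul_of_nonpos_left hx.1 hβneg

theorem half_le_right_endpoint (hβ : 1 < β) (hβm : β ^ 2 ≤ 2 * m + 1)
    (hr : r = m / (β ^ 2 - 1)) : 1 / 2 ≤ r := by
  rw [hr, le_div_iff₀ (by nlinarith)]
  linarith

theorem left_endpoint_le_neg_half (hβ : 1 < β) (hβm : β ^ 2 ≤ 2 * m + 1)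
    (hl : l = -β * m / (β ^ 2 - 1)) : l ≤ -1 / 2 := by
  have hhalf := half_le_right_endpoint hβ hβm rfl
  rw [hl, mul_div_assoc]
  nlinarith

theorem neg_one_div_two_mul_le_iff (hβ : 0 < β) : -1 / (2 * β) ≤ x ↔ -β * x ≤ 1 / 2 := by
  rw [div_le_iff₀ (by positivity)]
  constructor <;> intro h <;> linarith

theorem lt_last_threshold_iff (hβ : 0 < β) :
    x < -(m - 1) / β - 1 / (2 * β) ↔ m - 1 / 2 < -β * x := by
  have hthreshold : -(m - 1) / β - 1 / (2 * β) = (1 / 2 - m) / β := by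
    field_simp
    ring
  rw [hthreshold, lt_div_iff₀ hβ]
  constructor <;> intro h <;> linarith

theorem neg_mul_mem_Ioc_of_notMem (hβ : 0 < β) (hx : x ∈ Set.Icc l r)
    (hx0 : x ∉ Set.Icc (-1 / (2 * β)) r)
    (hxm : x ∉ Set.Ico l (-(m - 1) / β - 1 / (2 * β))) :
    -β * x ∈ Set.Ioc (1 / 2) (m - 1 / 2) :=
  ⟨not_le.1 fun h ↦ hx0 ⟨(neg_one_div_two_mul_le_iff hβ).2 h, hx.2⟩,
    not_lt.1 fun h ↦ hxm ⟨hx.1, (lt_last_threshold_iff hβ).2 h⟩⟩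

theorem abs_neg_mul_sub_one_le_half_of_notMem (hβ : 0 < β) (hm : m ≤ 2) (hx : x ∈ Set.Icc l r)
    (hx0 : x ∉ Set.Icc (-1 / (2 * β)) r)
    (hxm : x ∉ Set.Ico l (-(m - 1) / β - 1 / (2 * β))) :
    |-β * x - 1| ≤ 1 / 2 := by
  obtain ⟨hgt, hle⟩ := neg_mul_mem_Ioc_of_notMem hβ hx hx0 hxm
  exact abs_le.2 ⟨by linarith, by linarith⟩

end Interval

theorem optimal_transformation_neg_base_special_general {β l r : K} {m : ℤ} (hβ : 1 < β)
    (hβm : β ^ 2 ≤ 2 * m + 1) (hl : l = -β * m / (β ^ 2 - 1)) (hr : r = (m : K) / (β ^ 2 - 1))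
    (D : K → ℤ)
    (hD0 : ∀ x ∈ Set.Icc (-1 / (2 * β)) r, D x = 0)
    (hDm : ∀ x ∈ Set.Ico l (-((m : K) - 1) / β - 1 / (2 * β)), D x = m)
    (hDmid : ∀ x ∈ Set.Icc l r, x ∉ Set.Icc (-1 / (2 * β)) r →
      x ∉ Set.Ico l (-((m : K) - 1) / β - 1 / (2 * β)) → |-β * x - D x| ≤ 1 / 2) :
    ∀ x ∈ Set.Icc l r, -β * x - D x ∈ Set.Icc l r ∧ IsNearestDigit m (-β * x) (D x) := by
  intro x hx
  have hβ0 : 0 < β := one_pos.trans hβ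
  have hm_pos : (0 : K) < m := by nlinarith
  have hm : 0 ≤ m := mod_cast hm_pos.le
  have hnearest : IsNearestDigit m (-β * x) (D x) := by
    by_cases hx0 : x ∈ Set.Icc (-1 / (2 * β)) r
    · rw [hD0 x hx0]
      exact isNearestDigit_zero hm ((neg_one_div_two_mul_le_iff hβ0).1 hx0.1)
    by_cases hxm : x ∈ Set.Ico l (-((m : K) - 1) / β - 1 / (2 * β))
    · rw [hDm x hxm]
      exact isNearestDigit_last hm ((lt_last_threshold_iff hβ0).1 hxm.2).le
    · have hmid := hDmid x hx hx0 hxm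
      obtain ⟨hlower, hupper⟩ := abs_le.1 hmid
      obtain ⟨hgt, hle⟩ := neg_mul_mem_Ioc_of_notMem hβ0 hx hx0 hxm
      have hD_nonneg : (0 : K) ≤ D x := by linarith
      have hD_le : (D x : K) ≤ m := by linarith
      exact isNearestDigit_of_abs_sub_le ⟨mod_cast hD_nonneg, mod_cast hD_le⟩ hmid
  exact ⟨hnearest.sub_mem_Icc (left_endpoint_le_neg_half hβ hβm hl)
    (half_le_right_endpoint hβ hβm hr) (neg_mul_mem_Icc hβ hl hr hx), hnearest⟩

end OrderedField

theorem floor_eq_of_mem_Ioc_sqrt {β : ℝ} {n : ℤ} (hn : 0 < n)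
    (hβ : β ∈ Set.Ioc (n : ℝ) (√(2 * n + 1))) : ⌊β⌋ = n := by
  have hn' : (0 : ℝ) < n := mod_cast hn
  have hsqrt : √(2 * n + 1) < n + 1 := (Real.sqrt_lt' (by positivity)).2 (by nlinarith)
  exact Int.floor_eq_iff.2 ⟨hβ.1.le, hβ.2.trans_lt hsqrt⟩

theorem one_lt_and_floor_le_two_and_sq_le {β : ℝ}
    (hβ : β ∈ Set.Ioc (1 : ℝ) (√3) ∪ Set.Ioc (2 : ℝ) (√5)) :
    1 < β ∧ ⌊β⌋ ≤ 2 ∧ β ^ 2 ≤ 2 * ⌊β⌋ + 1 := by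
  rcases hβ with ⟨hlt, hle⟩ | ⟨hlt, hle⟩
  · have hfloor : ⌊β⌋ = 1 := floor_eq_of_mem_Ioc_sqrt one_pos (by norm_num [hlt, hle])
    have hsq : β ^ 2 ≤ 3 := (Real.le_sqrt' (by linarith)).1 hle
    norm_num [hfloor, hlt, hsq]
  · have hfloor : ⌊β⌋ = 2 := floor_eq_of_mem_Ioc_sqrt two_pos (by norm_num [hlt, hle])
    have hsq : β ^ 2 ≤ 5 := (Real.le_sqrt' (by linarith)).1 hle
    norm_num [hfloor, one_lt_two.trans hlt, hsq]

/-- Proposition, second part: let `β ∈ (1,√3] ∪ (2,√5]`, `β ∉ ℤ`,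
`l = −β⌊β⌋/(β²−1)`, `r = ⌊β⌋/(β²−1)`, `J = [l,r]`. Define `D(x) = 0` for
`x ∈ [−1/(2β), r]`, `D(x) = ⌊β⌋` for `x ∈ [l, −(⌊β⌋−1)/β − 1/(2β))`, and `D(x) = 1`
otherwise. Then for every `x ∈ J` the digit `a = D(x)` satisfies (i) `−βx − a ∈ J` and
(ii) `|−βx − a| ≤ |−βx − b|` for every `b ∈ {0,…,⌊β⌋}` with `−βx − b ∈ J`. -/
theorem optimal_transformation_neg_base_special
    (β : ℝ) (hβ : β ∈ Set.Ioc (1 : ℝ) (Real.sqrt 3) ∪ Set.Ioc (2 : ℝ) (Real.sqrt 5))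
    (hβZ : ∀ n : ℤ, β ≠ n)
    (l r : ℝ) (hl : l = -β * ⌊β⌋ / (β ^ 2 - 1)) (hr : r = (⌊β⌋ : ℝ) / (β ^ 2 - 1))
    (D : ℝ → ℤ)
    (hD0 : ∀ x ∈ Set.Icc (-1 / (2 * β)) r, D x = 0)
    (hDm : ∀ x ∈ Set.Ico l (-((⌊β⌋ : ℝ) - 1) / β - 1 / (2 * β)), D x = ⌊β⌋)
    (hD1 : ∀ x ∈ Set.Icc l r, x ∉ Set.Icc (-1 / (2 * β)) r →
      x ∉ Set.Ico l (-((⌊β⌋ : ℝ) - 1) / β - 1 / (2 * β)) → D x = 1) :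
    ∀ x ∈ Set.Icc l r,
      -β * x - D x ∈ Set.Icc l r ∧
      ∀ b : ℤ, 0 ≤ b → b ≤ ⌊β⌋ → -β * x - b ∈ Set.Icc l r →
        |-β * x - D x| ≤ |-β * x - b| := by
  intro x hx
  obtain ⟨hone, hfloor, hsq⟩ := one_lt_and_floor_le_two_and_sq_le hβ
  obtain ⟨hmem, -, hmin⟩ := optimal_transformation_neg_base_special_general hone hsq hl hr D hD0 hDm
    (fun x hx hx0 hxm ↦ by
      simpa only [hD1 x hx hx0 hxm, Int.cast_one] using abs_neg_mul_sub_one_le_half_of_notMem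
        (one_pos.trans hone) (mod_cast hfloor) hx hx0 hxm) x hx
  exact ⟨hmem, fun b hb0 hbm _ ↦ hmin b ⟨hb0, hbm⟩⟩
end

section
/- Let β > 1 with β ∉ ℕ and let A = {0,1,…,⌊β⌋}. Then the set of x ∈ J_{−β,A} = [−β⌊β⌋/(β²−1), ⌊β⌋/(β²−1)] that possess an optimal (−β,A)-representation has Lebesgue measure zero; i.e., almost every x ∈ J_{−β,A} has no optimal representation. -/
/-- A `(γ, B)`-representation of `x`: a sequence of digits `b i ∈ B` (here `b i` is the
digit `b_{i+1}` of the paper, i.e. sequences are 0-indexed) with `x = ∑_{i ≥ 1} b_i / γ^i`. -/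
def IsRep (γ : ℝ) (B : Set ℝ) (b : ℕ → ℝ) (x : ℝ) : Prop :=
  (∀ i, b i ∈ B) ∧ HasSum (fun i : ℕ => b i / γ ^ (i + 1)) x

/-- `J_{γ,B}`: the set of real numbers admitting a `(γ,B)`-representation. -/
def RepSet (γ : ℝ) (B : Set ℝ) : Set ℝ := {x | ∃ b, IsRep γ B b x}

/-- A `(γ,B)`-representation `c` of `x` is optimal if its partial sums approximate `x`
at least as well as those of any other `(γ,B)`-representation of `x`. -/
def IsOptimalRep (γ : ℝ) (B : Set ℝ) (c : ℕ → ℝ) (x : ℝ) : Prop :=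
  IsRep γ B c x ∧ ∀ b : ℕ → ℝ, IsRep γ B b x → ∀ n : ℕ, 1 ≤ n →
    |x - ∑ i ∈ Finset.range n, c i / γ ^ (i + 1)| ≤
      |x - ∑ i ∈ Finset.range n, b i / γ ^ (i + 1)|

/-- The digit alphabet `{0, 1, …, M}` as a set of reals. -/
def digitSet (M : ℤ) : Set ℝ := (fun k : ℤ => (k : ℝ)) '' Set.Icc 0 M

/-!
Along an optimal expansion the remainders evolve by `x ↦ -β * x - d`, where `d` is the admissible
digit leaving the smallest remainder; this map sends the set `S` of reals with an optimal
expansion into itself. Just below each point where the preferred digit switches from `d` to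
`d + 1` there is a hole disjoint from `S`: there `d` is forced as first digit although the digits
`d + 1, ⌊β⌋` approximate better after two steps. An interval `I` either is mapped affinely, with
factor `β`, onto an interval, or is cut by a switch point into such a piece and a piece having a
hole at its end. Hence the excess `|S ∩ I| - θ |I|`, for a suitable `θ < 1`, is at most `β⁻¹`
times the excess of another interval. Excesses being bounded, none is positive, and `S` is null
by the Lebesgue density theorem.
-/

open Set Filter MeasureTheory
open scoped Topology ENNReal

/-- The `n`-th remainder `γ ^ n * (x - ∑ i < n, b i / γ ^ (i + 1))` of the expansion of `x` with
digits `b`, encoded by its recursion; optimality compares absolute values of remainders. -/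
def repRemainder (γ : ℝ) (b : ℕ → ℝ) (x : ℝ) : ℕ → ℝ
  | 0 => x
  | n + 1 => γ * repRemainder γ b x n - b n

/-- The digit sequence `d, b 0, b 1, …`, which represents `x` if `b` represents `γ * x - d`. -/
def prependDigit (d : ℝ) (b : ℕ → ℝ) : ℕ → ℝ
  | 0 => d
  | n + 1 => b n

/-- The set of reals possessing an optimal `(γ,B)`-representation. -/
def optimalRepSet (γ : ℝ) (B : Set ℝ) : Set ℝ := {x | ∃ c, IsOptimalRep γ B c x}

section Representations

variable {γ x d : ℝ} {B J : Set ℝ} {b c : ℕ → ℝ}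

lemma sub_sum_eq_repRemainder_div (hγ : γ ≠ 0) (b : ℕ → ℝ) (x : ℝ) (n : ℕ) :
    x - ∑ i ∈ Finset.range n, b i / γ ^ (i + 1) = repRemainder γ b x n / γ ^ n := by
  induction n with
  | zero => simp [repRemainder]
  | succ n ih =>
    rw [Finset.sum_range_succ, ← sub_sub, ih, repRemainder, pow_succ]
    field_simp

lemma repRemainder_succ_eq_tail (γ : ℝ) (b : ℕ → ℝ) (x : ℝ) (n : ℕ) :
    repRemainder γ b x (n + 1) = repRemainder γ (fun i ↦ b (i + 1)) (γ * x - b 0) n := by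
  induction n with
  | zero => rfl
  | succ n ih => rw [repRemainder, ih, repRemainder]

lemma isRep_iff_tail (hγ : γ ≠ 0) :
    IsRep γ B b x ↔ b 0 ∈ B ∧ IsRep γ B (fun i ↦ b (i + 1)) (γ * x - b 0) := by
  have hsum : HasSum (fun i ↦ b i / γ ^ (i + 1)) x ↔
      HasSum (fun i ↦ b (i + 1) / γ ^ (i + 1)) (γ * x - b 0) := by
    rw [← hasSum_nat_add_iff' 1, ← hasSum_mul_left_iff hγ]
    have hterm (i : ℕ) : γ * (b (i + 1) / γ ^ (i + 1 + 1)) = b (i + 1) / γ ^ (i + 1) := by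
      rw [pow_succ _ (i + 1)]
      field_simp
    have htotal : γ * (x - ∑ i ∈ Finset.range 1, b i / γ ^ (i + 1)) = γ * x - b 0 := by
      rw [Finset.sum_range_one, zero_add, pow_one]
      field_simp
    simp only [hterm, htotal]
  rw [IsRep, IsRep, hsum, ← and_assoc, Nat.and_forall_add_one (p := fun i ↦ b i ∈ B)]

lemma IsRep.prependDigit (hγ : γ ≠ 0) (hd : d ∈ B) (hb : IsRep γ B b (γ * x - d)) :
    IsRep γ B (prependDigit d b) x :=
  (isRep_iff_tail hγ).2 ⟨hd, hb⟩

lemma isRep_of_abs_repRemainder_le {C : ℝ} (hγ : 1 < |γ|) (hb : ∀ i, b i ∈ B)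
    (hC : ∀ n, |repRemainder γ b x n| ≤ C) : IsRep γ B b x := by
  have hγ0 : γ ≠ 0 := abs_pos.1 (one_pos.trans hγ)
  have hsummable : Summable fun n ↦ repRemainder γ b x n / γ ^ n := by
    refine ((summable_geometric_of_lt_one (by positivity)
      (inv_lt_one_of_one_lt₀ hγ)).mul_left C).of_norm_bounded fun n ↦ ?_
    rw [Real.norm_eq_abs, abs_div, abs_pow, inv_pow, div_eq_mul_inv]
    gcongr
    exact hC n
  have hterm (n : ℕ) : b n / γ ^ (n + 1) =
      repRemainder γ b x n / γ ^ n - repRemainder γ b x (n + 1) / γ ^ (n + 1) := by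
    simp only [repRemainder, pow_succ]
    field_simp
    ring
  have htelescope := hsummable.hasSum.sub ((hasSum_nat_add_iff' 1).2 hsummable.hasSum)
  simp only [← hterm, sub_sub_cancel, Finset.sum_range_one, pow_zero, div_one] at htelescope
  exact ⟨hb, htelescope⟩

lemma subset_repSet (hγ : 1 < |γ|) (hJ : Bornology.IsBounded J)
    (h : ∀ x ∈ J, ∃ d ∈ B, γ * x - d ∈ J) : J ⊆ RepSet γ B := by
  intro x hx
  choose! digit digit_mem next_mem using h
  let orbit (n : ℕ) : ℝ := (fun y ↦ γ * y - digit y)^[n] x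
  have orbit_succ (n : ℕ) : orbit (n + 1) = γ * orbit n - digit (orbit n) :=
    Function.iterate_succ_apply' _ _ _
  have orbit_mem (n : ℕ) : orbit n ∈ J := by
    induction n with
    | zero => exact hx
    | succ n ih => exact orbit_succ n ▸ next_mem _ ih
  have remainder_eq (n : ℕ) : repRemainder γ (fun i ↦ digit (orbit i)) x n = orbit n := by
    induction n with
    | zero => rfl
    | succ n ih => rw [repRemainder, ih, orbit_succ]
  obtain ⟨C, hC⟩ := hJ.exists_norm_le
  exact ⟨_, isRep_of_abs_repRemainder_le hγ (fun i ↦ digit_mem _ (orbit_mem i))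
    fun n ↦ remainder_eq n ▸ hC _ (orbit_mem n)⟩

lemma repSet_subset (hJ : IsClosed J) (h0 : 0 ∈ J)
    (h : ∀ d ∈ B, ∀ y ∈ J, (d + y) / γ ∈ J) : RepSet γ B ⊆ J := by
  have partialSum_mem (n : ℕ) : ∀ b : ℕ → ℝ, (∀ i, b i ∈ B) →
      ∑ i ∈ Finset.range n, b i / γ ^ (i + 1) ∈ J := by
    induction n with
    | zero => simpa using fun _ _ ↦ h0
    | succ n ih =>
      intro b hb
      convert h _ (hb 0) _ (ih (fun i ↦ b (i + 1)) fun i ↦ hb (i + 1)) using 1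
      rw [Finset.sum_range_succ', add_div, Finset.sum_div, add_comm]
      simp only [zero_add, pow_zero, one_mul, pow_succ, div_div]
  rintro x ⟨b, hb, hsum⟩
  exact hJ.mem_of_tendsto hsum.tendsto_sum_nat (.of_forall fun n ↦ partialSum_mem n b hb)

lemma IsOptimalRep.abs_repRemainder_le (hγ : γ ≠ 0) (hc : IsOptimalRep γ B c x)
    (hb : IsRep γ B b x) {n : ℕ} (hn : 1 ≤ n) :
    |repRemainder γ c x n| ≤ |repRemainder γ b x n| := by
  have hle := hc.2 b hb n hn
  rwa [sub_sum_eq_repRemainder_div hγ, sub_sum_eq_repRemainder_div hγ, abs_div, abs_div,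
    div_le_div_iff_of_pos_right (by positivity)] at hle

lemma IsOptimalRep.tail (hγ : γ ≠ 0) (hc : IsOptimalRep γ B c x) :
    IsOptimalRep γ B (fun i ↦ c (i + 1)) (γ * x - c 0) := by
  refine ⟨((isRep_iff_tail hγ).1 hc.1).2, fun b hb n _ ↦ ?_⟩
  have hle := hc.abs_repRemainder_le hγ (hb.prependDigit hγ (hc.1.1 0)) n.succ_pos
  rw [repRemainder_succ_eq_tail, repRemainder_succ_eq_tail] at hle
  rw [sub_sum_eq_repRemainder_div hγ, sub_sum_eq_repRemainder_div hγ, abs_div, abs_div]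
  exact div_le_div_of_nonneg_right hle (abs_nonneg _)

lemma IsOptimalRep.head_eq (hγ : γ ≠ 0) (hc : IsOptimalRep γ B c x) (hd : d ∈ B)
    (hmem : γ * x - d ∈ RepSet γ B)
    (hlt : ∀ k ∈ B, k ≠ d → γ * x - k ∈ RepSet γ B → |γ * x - d| < |γ * x - k|) : c 0 = d := by
  obtain ⟨b, hb⟩ := hmem
  by_contra hne
  have hle : |γ * x - c 0| ≤ |γ * x - d| :=
    hc.abs_repRemainder_le hγ (hb.prependDigit hγ hd) le_rfl
  exact hle.not_gt (hlt _ (hc.1.1 0) hne ⟨_, (hc.tail hγ).1⟩)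

end Representations

section NegativeBase

lemma intCast_mem_digitSet {k M : ℤ} : (k : ℝ) ∈ digitSet M ↔ k ∈ Icc 0 M := by
  simp [digitSet]

lemma digitSet_subset_Icc (M : ℤ) : digitSet M ⊆ Icc (0 : ℝ) M := by
  rintro _ ⟨k, hk, rfl⟩
  exact ⟨Int.cast_nonneg hk.1, Int.cast_le.2 hk.2⟩

/-- The largest real having a `(-β)`-representation with digits `0, …, M`; the smallest one is
`-β` times as large. -/
noncomputable def repMax (β : ℝ) (M : ℤ) : ℝ := M / (β ^ 2 - 1)

/-- The point that `-β * x - d` crosses when the preferred first digit of `x` changes from `d`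
to `d + 1`: beyond `repMax` the digit `d` is no longer admissible, and beyond `1 / 2` the digit
`d + 1` leaves the smaller remainder. -/
noncomputable def switchPoint (β : ℝ) (M : ℤ) : ℝ := min (repMax β M) (1 / 2)

/-- The values of `-β * x` for which `d` is the preferred first digit of `x`. Neighbouring cells
share their boundary points, where two digits compete. -/
def digitCell (β : ℝ) (M d : ℤ) : Set ℝ :=
  {y | (d = 0 ∨ switchPoint β M - 1 ≤ y - d) ∧ (d = M ∨ y - d ≤ switchPoint β M)}

variable {β x y : ℝ} {M d : ℤ}

lemma sq_mul_repMax (hβ : 1 < β) : β ^ 2 * repMax β M = repMax β M + M := by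
  have : β ^ 2 - 1 ≠ 0 := by nlinarith
  rw [repMax]
  field_simp
  ring

lemma repMax_nonneg (hβ : 1 < β) (hM : 0 ≤ M) : 0 ≤ repMax β M :=
  div_nonneg (Int.cast_nonneg hM) (by nlinarith)

lemma repMax_add_mul_repMax (hβ : 1 < β) (M : ℤ) :
    repMax β M + β * repMax β M = M / (β - 1) := by
  rw [eq_div_iff (by linarith)]
  linarith [sq_mul_repMax (M := M) hβ]

lemma one_le_repMax_add (hβ : 1 < β) (hβM : β ≤ M + 1) :
    1 ≤ repMax β M + β * repMax β M := by
  rw [repMax_add_mul_repMax hβ, one_le_div (by linarith)]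
  linarith

lemma one_lt_repMax_add (hβ : 1 < β) (hβM : β < M + 1) :
    1 < repMax β M + β * repMax β M := by
  rw [repMax_add_mul_repMax hβ, one_lt_div (by linarith)]
  linarith

lemma exists_mem_digitCell (hM : 0 ≤ M) (β y : ℝ) : ∃ d ∈ Icc 0 M, y ∈ digitCell β M d := by
  set s := switchPoint β M
  have hle := Int.le_ceil (y - s)
  have hlt := Int.ceil_lt_add_one (y - s)
  rcases le_total ⌈y - s⌉ 0 with hneg | hpos
  · have : (⌈y - s⌉ : ℝ) ≤ 0 := by exact_mod_cast hneg
    exact ⟨0, ⟨le_rfl, hM⟩, .inl rfl, .inr (by push_cast; linarith)⟩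
  rcases le_total ⌈y - s⌉ M with hleM | hgeM
  · exact ⟨⌈y - s⌉, ⟨hpos, hleM⟩, .inr (by linarith), .inr (by linarith)⟩
  · have : (M : ℝ) ≤ ⌈y - s⌉ := by exact_mod_cast hgeM
    exact ⟨M, ⟨hM, le_rfl⟩, .inr (by linarith), .inl rfl⟩

lemma sub_mem_Icc_of_mem_digitCell (hβ : 1 < β) (hβM : β ≤ M + 1)
    (hx : x ∈ Icc (-(β * repMax β M)) (repMax β M)) (hcell : -β * x ∈ digitCell β M d) :
    -β * x - d ∈ Icc (-(β * repMax β M)) (repMax β M) := by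
  have hL := one_le_repMax_add hβ hβM
  have hsq := sq_mul_repMax (M := M) hβ
  have hst : switchPoint β M ≤ repMax β M := min_le_left _ _
  have hs : 1 - β * repMax β M ≤ switchPoint β M :=
    le_min (by linarith) (by nlinarith)
  obtain ⟨hx₁, hx₂⟩ := hx
  obtain ⟨hlow, hupp⟩ := hcell
  constructor
  · rcases hlow with rfl | hlow
    · push_cast
      nlinarith
    · linarith
  · rcases hupp with rfl | hupp
    · nlinarith
    · linarith

theorem repSet_neg (hβ : 1 < β) (hβM : β ≤ M + 1) :
    RepSet (-β) (digitSet M) = Icc (-(β * repMax β M)) (repMax β M) := by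
  have hM : 0 ≤ M := (Int.cast_pos (R := ℝ).1 (by linarith)).le
  have ht := repMax_nonneg hβ hM
  have hsq := sq_mul_repMax (M := M) hβ
  refine (repSet_subset isClosed_Icc ⟨by nlinarith, ht⟩ ?_).antisymm
    (subset_repSet (by rwa [abs_neg, abs_of_pos (by linarith)]) (Metric.isBounded_Icc _ _) ?_)
  · intro d hd y hy
    obtain ⟨hd₀, hdM⟩ := digitSet_subset_Icc M hd
    rw [div_neg, mem_Icc, neg_le_neg_iff, neg_le, div_le_iff₀ (by linarith),
      le_div_iff₀ (by linarith)]
    constructor <;> linarith [hy.1, hy.2]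
  · intro x hx
    obtain ⟨d, hd, hcell⟩ := exists_mem_digitCell hM β (-β * x)
    exact ⟨d, intCast_mem_digitSet.2 hd, sub_mem_Icc_of_mem_digitCell hβ hβM hx hcell⟩

/-- The left end of the hole below `switchPoint`. If `-β * x - d` lies in the hole and `d < M`,
an optimal expansion must begin with `d`, yet the admissible digits `d + 1, M` leave a smaller
second remainder. -/
noncomputable def holeLeft (β : ℝ) (M : ℤ) : ℝ :=
  max (1 - β * repMax β M) ((β - M) / (2 * β))

lemma holeLeft_pos (hβ : 1 < β) (hMβ : M < β) : 0 < holeLeft β M :=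
  lt_max_of_lt_right (div_pos (by linarith) (by linarith))

lemma holeLeft_lt_switchPoint (hβ : 1 < β) (hβM : β < M + 1) :
    holeLeft β M < switchPoint β M := by
  have hL := one_lt_repMax_add hβ hβM
  have : 1 < 2 * β * repMax β M := by nlinarith
  refine max_lt (lt_min (by linarith) (by linarith)) (lt_min ?_ ?_) <;>
    rw [div_lt_iff₀ (by linarith)] <;> linarith

lemma optimalRepSet_subset_repSet (γ : ℝ) (B : Set ℝ) : optimalRepSet γ B ⊆ RepSet γ B :=
  fun _ ⟨c, hc⟩ ↦ ⟨c, hc.1⟩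

lemma IsOptimalRep.head_eq_of_mem_Ioo_digitCell {c : ℕ → ℝ} {u v : ℝ} (hβ : 1 < β)
    (hβM : β ≤ M + 1) (hd : d ∈ Icc 0 M) (hu : u ∈ digitCell β M d) (hv : v ∈ digitCell β M d)
    (hx : -β * x ∈ Ioo u v) (hc : IsOptimalRep (-β) (digitSet M) c x) : c 0 = d := by
  have hJ := repSet_neg hβ hβM
  have hlow : d = 0 ∨ switchPoint β M - 1 < -β * x - d :=
    hu.1.imp_right fun h ↦ by linarith [hx.1]
  have hupp : d = M ∨ -β * x - d < switchPoint β M :=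
    hv.2.imp_right fun h ↦ by linarith [hx.2]
  have hcell : -β * x ∈ digitCell β M d := ⟨hlow.imp_right le_of_lt, hupp.imp_right le_of_lt⟩
  have hs : switchPoint β M ≤ 1 / 2 := min_le_right _ _
  refine hc.head_eq (by linarith) (intCast_mem_digitSet.2 hd)
    (hJ ▸ sub_mem_Icc_of_mem_digitCell hβ hβM (hJ ▸ ⟨c, hc.1⟩) hcell) ?_
  rintro _ ⟨k, hk, rfl⟩ hne hadm
  dsimp only at hne hadm ⊢
  rcases lt_or_gt_of_ne (Int.cast_injective.ne_iff.1 hne) with hkd | hdk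
  · have hstep : (k : ℝ) + 1 ≤ d := by exact_mod_cast hkd
    have hlow := hlow.resolve_left (hk.1.trans_lt hkd).ne'
    have hs' : switchPoint β M = 1 / 2 := by
      refine (min_choice _ _).resolve_left fun h ↦ ?_
      rw [hJ] at hadm
      rw [switchPoint, h] at hlow
      linarith [hadm.2]
    refine (abs_lt.2 ⟨?_, ?_⟩).trans_le (le_abs_self _) <;> linarith
  · have hstep : (d : ℝ) + 1 ≤ k := by exact_mod_cast hdk
    have hupp := hupp.resolve_left (hdk.trans_le hk.2).ne
    refine (abs_lt.2 ⟨?_, ?_⟩).trans_le (neg_le_abs _) <;> linarith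

lemma sub_mem_optimalRepSet {u v : ℝ} (hβ : 1 < β) (hβM : β ≤ M + 1) (hd : d ∈ Icc 0 M)
    (hu : u ∈ digitCell β M d) (hv : v ∈ digitCell β M d) (hxuv : -β * x ∈ Ioo u v)
    (hx : x ∈ optimalRepSet (-β) (digitSet M)) :
    -β * x - d ∈ optimalRepSet (-β) (digitSet M) := by
  obtain ⟨c, hc⟩ := hx
  rw [← hc.head_eq_of_mem_Ioo_digitCell hβ hβM hd hu hv hxuv]
  exact ⟨_, hc.tail (by linarith)⟩

lemma sub_notMem_hole (hβ : 1 < β) (hMβ : M < β) (hβM : β ≤ M + 1) (hd : d ∈ Ico 0 M)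
    (hx : x ∈ optimalRepSet (-β) (digitSet M)) :
    -β * x - d ∉ Ioo (holeLeft β M) (switchPoint β M) := by
  rintro ⟨hleft, hright⟩
  obtain ⟨c, hc⟩ := hx
  have hγ : -β ≠ 0 := by linarith
  have hs : switchPoint β M ≤ 1 / 2 := min_le_right _ _
  have hhole := holeLeft_pos hβ hMβ
  set z := -β * x - d with hz
  have hc0 : c 0 = d := by
    refine hc.head_eq_of_mem_Ioo_digitCell hβ hβM ⟨hd.1, hd.2.le⟩
      (u := holeLeft β M + d) (v := switchPoint β M + d)
      ⟨.inr ?_, .inr ?_⟩ ⟨.inr ?_, .inr ?_⟩ ⟨?_, ?_⟩ <;> linarith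
  have hadm : -β * (z - 1) - M ∈ RepSet (-β) (digitSet M) := by
    have hsq := sq_mul_repMax (M := M) hβ
    have hz₁ : 1 - β * repMax β M < z := (le_max_left _ _).trans_lt hleft
    have hz₂ : z < repMax β M := hright.trans_le (min_le_left _ _)
    rw [repSet_neg hβ hβM]
    constructor <;> nlinarith
  obtain ⟨e, he⟩ := hadm
  have hM : M ∈ Icc 0 M := ⟨(hd.1.trans_lt hd.2).le, le_rfl⟩
  have hd1 : d + 1 ∈ Icc 0 M := ⟨by linarith [hd.1], hd.2⟩
  have hb : IsRep (-β) (digitSet M) (prependDigit (d + 1 : ℤ) (prependDigit M e)) x := by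
    refine .prependDigit hγ (intCast_mem_digitSet.2 hd1)
      (.prependDigit hγ (intCast_mem_digitSet.2 hM) ?_)
    convert he using 2
    rw [hz]
    push_cast
    ring
  have hle : |-β * z - c 1| ≤ |β - M - β * z| := by
    have hle := hc.abs_repRemainder_le hγ hb one_le_two
    simp only [repRemainder, prependDigit, hc0] at hle
    convert hle using 2
    push_cast
    ring
  have hc1 : 0 ≤ c 1 := (digitSet_subset_Icc M (hc.1.1 1)).1
  have hbad : |β - M - β * z| < β * z := by
    have hz₃ : (β - M) / (2 * β) < z := (le_max_right _ _).trans_lt hleft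
    rw [div_lt_iff₀ (by linarith)] at hz₃
    rw [abs_lt]
    constructor <;> linarith
  linarith [neg_le_abs (-β * z - c 1)]

end NegativeBase

section Measure

lemma nonpos_of_forall_exists_le_mul {α : Type*} {s : Set α} {f : α → ℝ} {r C : ℝ} (hr₀ : 0 ≤ r)
    (hr₁ : r < 1) (hC : ∀ a ∈ s, f a ≤ C) (h : ∀ a ∈ s, ∃ a' ∈ s, f a ≤ r * f a') :
    ∀ a ∈ s, f a ≤ 0 := by
  have hpow (n : ℕ) : ∀ a ∈ s, f a ≤ r ^ n * C := by
    induction n with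
    | zero => simpa using hC
    | succ n ih =>
      intro a ha
      obtain ⟨a', ha', hle⟩ := h a ha
      calc f a ≤ r * f a' := hle
        _ ≤ r * (r ^ n * C) := by gcongr; exact ih a' ha'
        _ = r ^ (n + 1) * C := by ring
  have hlim : Tendsto (fun n ↦ r ^ n * C) atTop (𝓝 0) := by
    simpa using (tendsto_pow_atTop_nhds_zero_of_lt_one hr₀ hr₁).mul_const C
  exact fun a ha ↦ ge_of_tendsto' hlim fun n ↦ hpow n a ha

lemma measure_eq_zero_of_eventually_inter_closedBall_le {α : Type*} [MetricSpace α]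
    [SecondCountableTopology α] [MeasurableSpace α] [BorelSpace α] [HasBesicovitchCovering α]
    {μ : Measure α} [IsLocallyFiniteMeasure μ] {s : Set α} {θ : ℝ≥0∞} (hθ : θ < 1)
    (h : ∀ᵐ x ∂μ.restrict s, ∀ᶠ r in 𝓝[>] 0,
      μ (s ∩ Metric.closedBall x r) ≤ θ * μ (Metric.closedBall x r)) : μ s = 0 := by
  have hfalse : ∀ᵐ _ ∂μ.restrict s, False := by
    filter_upwards [h, Besicovitch.ae_tendsto_measure_inter_div μ s] with x hx hdensity
    refine hθ.not_ge (le_of_tendsto hdensity ?_)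
    filter_upwards [hx] with r hr
    exact ENNReal.div_le_of_le_mul hr
  rwa [eventually_false_iff_eq_bot, ae_eq_bot, Measure.restrict_eq_zero] at hfalse

variable {S : Set ℝ}

lemma volume_eq_zero_of_volume_real_inter_Ioo_le {A B θ : ℝ} (hθ : θ < 1) (hS : S ⊆ Icc A B)
    (h : ∀ p ∈ Icc A B, ∀ q ∈ Icc A B, p ≤ q → volume.real (S ∩ Ioo p q) ≤ θ * (q - p)) :
    volume S = 0 := by
  refine measure_eq_zero_of_eventually_inter_closedBall_le (θ := ENNReal.ofReal θ)
    (ENNReal.ofReal_lt_one.2 hθ) ?_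
  have hinterior : ∀ᵐ x ∂volume.restrict S, x ∈ Ioo A B := by
    refine ae_restrict_of_ae_restrict_of_subset hS ?_
    rw [← restrict_Ioo_eq_restrict_Icc]
    exact ae_restrict_mem measurableSet_Ioo
  filter_upwards [hinterior] with x hx
  filter_upwards [self_mem_nhdsWithin,
    (eventually_closedBall_subset (isOpen_Ioo.mem_nhds hx)).filter_mono nhdsWithin_le_nhds]
    with r (hr : 0 < r) hball
  rw [Real.closedBall_eq_Icc] at hball ⊢
  have hfinite : volume (S ∩ Icc (x - r) (x + r)) ≠ ∞ :=
    measure_ne_top_of_subset inter_subset_right isCompact_Icc.measure_ne_top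
  have hIoo := h _ (Ioo_subset_Icc_self (hball (left_mem_Icc.2 (by linarith))))
    _ (Ioo_subset_Icc_self (hball (right_mem_Icc.2 (by linarith)))) (by linarith)
  rw [measureReal_congr ((ae_eq_refl S).inter Ioo_ae_eq_Icc)] at hIoo
  rw [Real.volume_Icc, ← ENNReal.ofReal_mul' (by linarith), ← ofReal_measureReal hfinite]
  exact ENNReal.ofReal_le_ofReal hIoo

lemma volume_real_inter_Ioo_le_add (S : Set ℝ) (p m q : ℝ) :
    volume.real (S ∩ Ioo p q) ≤ volume.real (S ∩ Ioo p m) + volume.real (S ∩ Ioo m q) := by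
  rw [measureReal_congr ((ae_eq_refl S).inter (Ioo_ae_eq_Ico (a := m))),
    measureReal_congr ((ae_eq_refl S).inter (Ioo_ae_eq_Ioc (a := p) (b := m)))]
  refine (measureReal_mono ?_ ?_).trans (measureReal_union_le _ _)
  · rw [← inter_union_distrib_left]
    exact inter_subset_inter_right _ fun x hx ↦
      (le_or_gt x m).imp (fun h ↦ ⟨hx.1, h⟩) fun h ↦ ⟨h.le, hx.2⟩
  · exact measure_ne_top_of_subset
      (union_subset_union inter_subset_right inter_subset_right)
      (measure_union_lt_top measure_Ioc_lt_top measure_Ico_lt_top).ne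

lemma volume_real_inter_Ioo_le_of_mapsTo {β d p q : ℝ} (hβ : 0 < β)
    (hS : MapsTo (fun x ↦ -β * x - d) (S ∩ Ioo p q) S) :
    volume.real (S ∩ Ioo p q) ≤ β⁻¹ * volume.real (S ∩ Ioo (-β * q - d) (-β * p - d)) := by
  set T := S ∩ Ioo (-β * q - d) (-β * p - d)
  have hT : volume T ≠ ∞ := measure_ne_top_of_subset inter_subset_right measure_Ioo_lt_top.ne
  have hsub : S ∩ Ioo p q ⊆ (-β * ·) ⁻¹' ((· + -d) ⁻¹' T) := by
    intro x hx
    have hqx : -β * q < -β * x := mul_lt_mul_of_neg_left hx.2.2 (by linarith)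
    have hxp : -β * x < -β * p := mul_lt_mul_of_neg_left hx.2.1 (by linarith)
    exact ⟨hS hx, sub_lt_sub_right hqx d, sub_lt_sub_right hxp d⟩
  have hvol : volume ((-β * ·) ⁻¹' ((· + -d) ⁻¹' T)) = ENNReal.ofReal β⁻¹ * volume T := by
    rw [Real.volume_preimage_mul_left (by linarith), measure_preimage_add_right, inv_neg, abs_neg,
      abs_of_pos (inv_pos.2 hβ)]
  refine ENNReal.toReal_le_of_le_ofReal (by positivity) ?_
  rw [ENNReal.ofReal_mul (by positivity), ofReal_measureReal hT, ← hvol]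
  exact measure_mono hsub

lemma volume_real_inter_Ioo_le_of_disjoint {m q w ℓ : ℝ} (hw : 0 ≤ w) (hwℓ : w ≤ ℓ) (hmq : m ≤ q)
    (hq : q ≤ m + ℓ) (hS : Disjoint S (Ioo m (m + w))) :
    volume.real (S ∩ Ioo m q) ≤ (1 - w / ℓ) * (q - m) := by
  have hsub : S ∩ Ioo m q ⊆ Ico (m + w) q := fun x hx ↦
    ⟨not_lt.1 fun hlt ↦ disjoint_left.1 hS hx.1 ⟨hx.2.1, hlt⟩, hx.2.2⟩
  have hratio : w / ℓ ≤ 1 := div_le_one_of_le₀ hwℓ (hw.trans hwℓ)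
  have hw' : w / ℓ * (q - m) ≤ w := by
    rw [div_mul_comm]
    exact mul_le_of_le_one_left hw (div_le_one_of_le₀ (by linarith) (hw.trans hwℓ))
  calc volume.real (S ∩ Ioo m q) ≤ volume.real (Ico (m + w) q) :=
        measureReal_mono hsub measure_Ico_lt_top.ne
    _ = max (q - (m + w)) 0 := Real.volume_real_Ico
    _ ≤ (1 - w / ℓ) * (q - m) :=
        max_le (by linarith) (mul_nonneg (by linarith) (by linarith))

end Measure

section OptimalSetIsNull

variable {β p q : ℝ} {M : ℤ}

/-- The length of the preimage of a hole under `x ↦ -β * x - d`, relative to the length of the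
interval of representable reals. -/
noncomputable def holeRatio (β : ℝ) (M : ℤ) : ℝ :=
  (switchPoint β M - holeLeft β M) / β / (repMax β M + β * repMax β M)

lemma hole_preimage_length_le (hβ : 1 < β) (hβM : β < M + 1) :
    (switchPoint β M - holeLeft β M) / β ≤ repMax β M + β * repMax β M := by
  have hL := one_lt_repMax_add hβ hβM
  have hs : switchPoint β M ≤ repMax β M := min_le_left _ _
  have ha : 1 - β * repMax β M ≤ holeLeft β M := le_max_left _ _
  rw [div_le_iff₀ (by linarith)]
  nlinarith

lemma holeRatio_pos (hβ : 1 < β) (hβM : β < M + 1) : 0 < holeRatio β M :=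
  div_pos (div_pos (sub_pos.2 (holeLeft_lt_switchPoint hβ hβM)) (by linarith))
    (one_pos.trans (one_lt_repMax_add hβ hβM))

lemma holeRatio_le_one (hβ : 1 < β) (hβM : β < M + 1) : holeRatio β M ≤ 1 :=
  div_le_one_of_le₀ (hole_preimage_length_le hβ hβM)
    (one_pos.trans (one_lt_repMax_add hβ hβM)).le

lemma exists_digitCell_split (hβ : 0 < β) (hM : 0 ≤ M) (hpq : p ≤ q) :
    ∃ d ∈ Icc 0 M, ∃ m ∈ Icc p q, -β * p ∈ digitCell β M d ∧ -β * m ∈ digitCell β M d ∧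
      (m = q ∨ 1 ≤ d ∧ -β * m - (d - 1) = switchPoint β M) := by
  obtain ⟨d, hd, hp⟩ := exists_mem_digitCell hM β (-β * p)
  have hq : d = M ∨ -β * q - d ≤ switchPoint β M := hp.2.imp_right fun h ↦ by nlinarith
  by_cases hlow : d = 0 ∨ switchPoint β M - 1 ≤ -β * q - d
  · exact ⟨d, hd, q, right_mem_Icc.2 hpq, hp, ⟨hlow, hq⟩, .inl rfl⟩
  push Not at hlow
  obtain ⟨hd0, hlt⟩ := hlow
  obtain ⟨m, hm⟩ : ∃ m, -β * m = switchPoint β M - 1 + d :=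
    ⟨_, mul_div_cancel₀ _ (by linarith)⟩
  have hlep := hp.1.resolve_left hd0
  refine ⟨d, hd, m, ⟨?_, ?_⟩, hp, ⟨.inr (by linarith), .inr (by linarith)⟩,
    .inr ⟨by have := hd.1; lia, by linarith⟩⟩ <;> nlinarith

lemma volume_real_inter_Ioo_le_of_switch {m : ℝ} {d : ℤ} (hβ : 1 < β) (hMβ : M < β)
    (hβM : β < M + 1) (hd : d ∈ Ico 0 M) (hm : -β * m - d = switchPoint β M) (hmq : m ≤ q)
    (hq : q ≤ m + (repMax β M + β * repMax β M)) :
    volume.real (optimalRepSet (-β) (digitSet M) ∩ Ioo m q) ≤ (1 - holeRatio β M) * (q - m) := by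
  have hβ0 : 0 < β := by linarith
  have has := holeLeft_lt_switchPoint hβ hβM
  refine volume_real_inter_Ioo_le_of_disjoint (div_nonneg (by linarith) hβ0.le)
    (hole_preimage_length_le hβ hβM) hmq hq
    (disjoint_left.2 fun x hx ⟨hmx, hxw⟩ ↦ sub_notMem_hole hβ hMβ hβM.le hd hx ⟨?_, ?_⟩)
  · rw [← sub_lt_iff_lt_add', lt_div_iff₀ hβ0] at hxw
    linarith
  · nlinarith

/-- Only the part of the interval on which the last digit is preferred is enlarged by the factor
`β`; the rest ends in a hole and already has the desired density. -/
lemma exists_inter_Ioo_excess_le (hβ : 1 < β) (hMβ : M < β) (hβM : β < M + 1)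
    (hp : p ∈ RepSet (-β) (digitSet M)) (hq : q ∈ RepSet (-β) (digitSet M)) (hpq : p ≤ q) :
    ∃ p' ∈ RepSet (-β) (digitSet M), ∃ q' ∈ RepSet (-β) (digitSet M), p' ≤ q' ∧
      volume.real (optimalRepSet (-β) (digitSet M) ∩ Ioo p q) - (1 - holeRatio β M) * (q - p) ≤
        β⁻¹ * (volume.real (optimalRepSet (-β) (digitSet M) ∩ Ioo p' q') -
          (1 - holeRatio β M) * (q' - p')) := by
  set S := optimalRepSet (-β) (digitSet M)
  have hβ0 : 0 < β := by linarith
  have hM : 0 ≤ M := (Int.cast_pos (R := ℝ).1 (by linarith)).le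
  rw [repSet_neg hβ hβM.le] at hp hq ⊢
  obtain ⟨d, hd, m, hm, hcellp, hcellm, hswitch⟩ := exists_digitCell_split hβ0 hM hpq
  have hmJ : m ∈ Icc (-(β * repMax β M)) (repMax β M) := Icc_subset_Icc hp.1 hq.2 hm
  have hexpand : volume.real (S ∩ Ioo p m) ≤
      β⁻¹ * volume.real (S ∩ Ioo (-β * m - d) (-β * p - d)) :=
    volume_real_inter_Ioo_le_of_mapsTo hβ0 fun x hx ↦
      sub_mem_optimalRepSet hβ hβM.le hd hcellm hcellp
        ⟨by nlinarith [hx.2.2], by nlinarith [hx.2.1]⟩ hx.1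
  have hhole : volume.real (S ∩ Ioo m q) ≤ (1 - holeRatio β M) * (q - m) := by
    rcases hswitch with rfl | ⟨hd1, hs⟩
    · simp
    · exact volume_real_inter_Ioo_le_of_switch (d := d - 1) hβ hMβ hβM
        ⟨by lia, by have := hd.2; lia⟩ (by push_cast; exact hs) hm.2
        (by linarith [hmJ.1, hq.2])
  refine ⟨_, sub_mem_Icc_of_mem_digitCell hβ hβM.le hmJ hcellm, _,
    sub_mem_Icc_of_mem_digitCell hβ hβM.le hp hcellp, by nlinarith [hm.1], ?_⟩
  have hscale : β⁻¹ * ((1 - holeRatio β M) * (-β * p - d - (-β * m - d))) =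
      (1 - holeRatio β M) * (m - p) := by
    field_simp
    ring
  rw [mul_sub β⁻¹, hscale]
  linarith [volume_real_inter_Ioo_le_add S p m q]

lemma volume_real_optimalRepSet_inter_Ioo_le (hβ : 1 < β) (hMβ : M < β) (hβM : β < M + 1)
    (hp : p ∈ RepSet (-β) (digitSet M)) (hq : q ∈ RepSet (-β) (digitSet M)) (hpq : p ≤ q) :
    volume.real (optimalRepSet (-β) (digitSet M) ∩ Ioo p q) ≤
      (1 - holeRatio β M) * (q - p) := by
  set S := optimalRepSet (-β) (digitSet M)
  set J := RepSet (-β) (digitSet M) with hJ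
  have hexcess := nonpos_of_forall_exists_le_mul
    (s := {I : ℝ × ℝ | I.1 ∈ J ∧ I.2 ∈ J ∧ I.1 ≤ I.2})
    (f := fun I ↦ volume.real (S ∩ Ioo I.1 I.2) - (1 - holeRatio β M) * (I.2 - I.1))
    (C := repMax β M + β * repMax β M) (inv_nonneg.2 (by linarith))
    (inv_lt_one_of_one_lt₀ hβ) ?_ ?_ (p, q) ⟨hp, hq, hpq⟩
  · exact sub_nonpos.1 hexcess
  · rintro ⟨u, v⟩ ⟨hu, hv, huv⟩
    have hle : volume.real (S ∩ Ioo u v) ≤ v - u := by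
      rw [← Real.volume_real_Ioo_of_le huv]
      exact measureReal_mono inter_subset_right measure_Ioo_lt_top.ne
    have hnonneg : 0 ≤ (1 - holeRatio β M) * (v - u) :=
      mul_nonneg (sub_nonneg.2 (holeRatio_le_one hβ hβM)) (sub_nonneg.2 huv)
    rw [hJ, repSet_neg hβ hβM.le] at hu hv
    linarith [hu.1, hv.2]
  · rintro ⟨u, v⟩ ⟨hu, hv, huv⟩
    obtain ⟨u', hu', v', hv', huv', hle⟩ := exists_inter_Ioo_excess_le hβ hMβ hβM hu hv huv
    exact ⟨(u', v'), ⟨hu', hv', huv'⟩, hle⟩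

theorem volume_optimalRepSet_neg (hβ : 1 < β) (hMβ : M < β) (hβM : β < M + 1) :
    volume (optimalRepSet (-β) (digitSet M)) = 0 := by
  have hJ := repSet_neg hβ hβM.le
  refine volume_eq_zero_of_volume_real_inter_Ioo_le (sub_lt_self 1 (holeRatio_pos hβ hβM))
    (hJ ▸ optimalRepSet_subset_repSet _ _) fun p hp q hq hpq ↦ ?_
  rw [← hJ] at hp hq
  exact volume_real_optimalRepSet_inter_Ioo_le hβ hMβ hβM hp hq hpq

end OptimalSetIsNull

/-- Theorem, main result of the paper: for `β > 1`, `β ∉ ℕ`, and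
`A = {0,1,…,⌊β⌋}`, the set of `x ∈ J_{−β,A}` possessing an optimal
`(−β,A)`-representation has Lebesgue measure zero. -/
theorem almost_no_optimal_rep_neg_base
    (β : ℝ) (hβ : 1 < β) (hβN : ∀ n : ℕ, β ≠ n) :
    MeasureTheory.volume
      {x : ℝ | x ∈ RepSet (-β) (digitSet ⌊β⌋) ∧
        ∃ c : ℕ → ℝ, IsOptimalRep (-β) (digitSet ⌊β⌋) c x} = 0 := by
  have hfloor : (⌊β⌋ : ℝ) < β := by
    refine (Int.floor_le β).lt_of_ne fun h ↦ hβN ⌊β⌋₊ ?_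
    rw [natCast_floor_eq_intCast_floor (by linarith), h]
  exact measure_mono_null (fun x hx ↦ hx.2)
    (volume_optimalRepSet_neg hβ hfloor (Int.lt_floor_add_one β))
end

section
/- Let β > 1 be a confluent Pisot number, i.e., suppose there exist integers d ≥ 1, m ≥ 1, p with 0 ≤ p < m such that β^{d+1} = m β^d + m β^{d−1} + ⋯ + m β + p + 1 (so m = ⌊β⌋). Let k ≥ 1 and let y = Σ_{j=1}^k y_j/β^j with all y_j ∈ {0,1,…,m}, and suppose y ∈ [0,1). Then the greedy (Rényi) digits (x_j)_{j≥1} of y satisfy x_j = 0 for all j > k. -/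
/-- The Rényi (greedy) transformation `T(z) = βz − ⌊βz⌋`. -/
noncomputable def renyiT (β : ℝ) (z : ℝ) : ℝ := β * z - ⌊β * z⌋

/-- The `j`-th greedy digit of `y` in base `β` (0-indexed: `greedyDigit β y j = x_{j+1}`). -/
noncomputable def greedyDigit (β : ℝ) (y : ℝ) (j : ℕ) : ℤ := ⌊β * (renyiT β)^[j] y⌋

/-!
The confluent equation says that `1` has the `β`-expansion `m ⋯ m c` with `d` digits `m` and
`c = p + 1`. Subtracting `1` from a value `≥ 1` of a word of length `n` over `{0, …, m}` again gives
the value of such a word of the same length: by induction on `n`, one may subtract `m ⋯ m c`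
and all of its suffixes, because a leading digit that is too small is compensated by subtracting
an integer from the tail, which is one letter shorter. Hence the fractional part of the tail of a
word is the value of a word of that length, so `T` maps values of length `n + 1` to values of
length `n`, and `k` applications of `T` lead to `0`.
-/

section SubClosed

/-- `S` is stable under subtracting `a` from those of its elements that are at least `a`. For
`a = 1` and `S ⊆ [0, ∞)` this makes `S` stable under taking fractional parts. -/
def SubClosed {α : Type*} [Sub α] [LE α] (S : Set α) (a : α) : Prop :=
  ∀ v ∈ S, a ≤ v → v - a ∈ S

theorem SubClosed.intCast {R : Type*} [Ring R] [PartialOrder R] [IsOrderedRing R] {S : Set R}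
    (hS : SubClosed S 1) {q : ℤ} (hq : 0 ≤ q) : SubClosed S (q : R) := by
  lift q to ℕ using hq
  induction q with
  | zero => intro v hv _; simpa using hv
  | succ q ih =>
    intro v hv hqv
    push_cast at ih hqv ⊢
    have hsub : v - q ∈ S := ih v hv ((le_add_of_nonneg_right zero_le_one).trans hqv)
    rw [← sub_sub]
    exact hS _ hsub (le_sub_iff_add_le'.2 hqv)

theorem subClosed_singleton_zero {α : Type*} [AddGroup α] [PartialOrder α] {a : α} (ha : 0 ≤ a) :
    SubClosed {0} a := by
  rintro _ rfl ha'
  simp [le_antisymm ha' ha]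

end SubClosed

section Definitions

variable {K : Type*} [Field K]

/-- The values `∑_{j=1}^n w_j / β^j` of the words `w_1 ⋯ w_n` of length `n` over `{0, …, m}`, built
by prepending digits. -/
def digitValues (β : K) (m : ℤ) : ℕ → Set K
  | 0 => {0}
  | n + 1 => {v | ∃ w ∈ Set.Icc 0 m, ∃ t ∈ digitValues β m n, v = (w + t) / β}

/-- The value of the word `m ⋯ m c` with `j` digits `m`. For `j ≤ d` these are the suffixes of the
expansion of `1` in a confluent base. -/
def confluentTail (β : K) (m c : ℤ) : ℕ → K
  | 0 => c / β
  | j + 1 => (m + confluentTail β m c j) / β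

theorem sum_div_pow_mem_digitValues {β : K} {m : ℤ} {n : ℕ} {y : ℕ → ℤ}
    (hy : ∀ j < n, y j ∈ Set.Icc 0 m) :
    ∑ j ∈ Finset.range n, (y j : K) / β ^ (j + 1) ∈ digitValues β m n := by
  induction n generalizing y with
  | zero => simp [digitValues]
  | succ n ih =>
    refine ⟨y 0, hy 0 n.succ_pos, _, ih fun j hj => hy (j + 1) (Nat.succ_lt_succ hj), ?_⟩
    rw [Finset.sum_range_succ', zero_add, pow_one, add_comm, add_div, Finset.sum_div]
    simp only [div_div, ← pow_succ]

theorem pow_mul_confluentTail {β : K} (hβ : β ≠ 0) (m c : ℤ) (j : ℕ) :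
    β ^ (j + 1) * confluentTail β m c j = m * ∑ i ∈ Finset.range j, β ^ (i + 1) + c := by
  induction j with
  | zero => simp [confluentTail, mul_div_cancel₀ _ hβ]
  | succ j ih =>
    calc β ^ (j + 2) * confluentTail β m c (j + 1)
        = β ^ (j + 1) * m + β ^ (j + 1) * confluentTail β m c j := by
          rw [confluentTail]; field_simp; ring
      _ = m * ∑ i ∈ Finset.range (j + 1), β ^ (i + 1) + c := by
          rw [ih, Finset.sum_range_succ]; ring

theorem confluentTail_eq_one {β : K} (hβ : β ≠ 0) {m c : ℤ} {d : ℕ}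
    (h : β ^ (d + 1) = m * ∑ j ∈ Finset.range d, β ^ (j + 1) + c) :
    confluentTail β m c d = 1 := by
  rw [← pow_mul_confluentTail hβ] at h
  exact (mul_eq_left₀ (pow_ne_zero _ hβ)).1 h.symm

end Definitions

section Ordered

variable {K : Type*} [Field K] [LinearOrder K] [IsStrictOrderedRing K] {β : K} {m c : ℤ} {n : ℕ}

theorem nonneg_of_mem_digitValues (hβ : 0 ≤ β) {v : K} (hv : v ∈ digitValues β m n) : 0 ≤ v := by
  induction n generalizing v with
  | zero => exact (Set.mem_singleton_iff.1 hv).ge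
  | succ n ih =>
    obtain ⟨w, hw, t, ht, rfl⟩ := hv
    exact div_nonneg (add_nonneg (Int.cast_nonneg hw.1) (ih ht)) hβ

theorem confluentTail_nonneg (hβ : 0 ≤ β) (hm : 0 ≤ m) (hc : 0 ≤ c) (j : ℕ) :
    0 ≤ confluentTail β m c j := by
  induction j with
  | zero => exact div_nonneg (Int.cast_nonneg hc) hβ
  | succ j ih => exact div_nonneg (add_nonneg (Int.cast_nonneg hm) ih) hβ

theorem subClosed_digitValues_succ_intCast_div (hβ : 0 < β) (hone : SubClosed (digitValues β m n) 1)
    (hc : 0 ≤ c) : SubClosed (digitValues β m (n + 1)) (c / β) := by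
  rintro _ ⟨w, ⟨hw0, hwm⟩, t, ht, rfl⟩ hle
  rw [div_le_div_iff_of_pos_right hβ] at hle
  rcases le_total c w with hcw | hwc
  · exact ⟨w - c, ⟨by lia, by lia⟩, t, ht, by push_cast; ring⟩
  · have hborrow : t - (c - w : ℤ) ∈ digitValues β m n :=
      hone.intCast (sub_nonneg.2 hwc) t ht (by push_cast; linarith)
    exact ⟨0, ⟨le_rfl, hw0.trans hwm⟩, _, hborrow, by push_cast; ring⟩

theorem subClosed_digitValues_succ_add_div (hβ : 0 < β) (hone : SubClosed (digitValues β m n) 1)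
    {a : K} (ha0 : 0 ≤ a) (ha : SubClosed (digitValues β m n) a) :
    SubClosed (digitValues β m (n + 1)) ((m + a) / β) := by
  rintro _ ⟨w, ⟨hw0, hwm⟩, t, ht, rfl⟩ hle
  rw [div_le_div_iff_of_pos_right hβ] at hle
  have hborrow : t - (m - w : ℤ) ∈ digitValues β m n :=
    hone.intCast (sub_nonneg.2 hwm) t ht (by push_cast; linarith)
  have hrest : t - (m - w : ℤ) - a ∈ digitValues β m n :=
    ha _ hborrow (by push_cast; linarith)
  exact ⟨0, ⟨le_rfl, hw0.trans hwm⟩, _, hrest, by push_cast; ring⟩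

theorem subClosed_digitValues_confluentTail (hβ : 0 < β) (hm : 0 ≤ m) (hc : 0 ≤ c) {d : ℕ}
    (hd : confluentTail β m c d = 1) {j : ℕ} (hj : j ≤ d) :
    SubClosed (digitValues β m n) (confluentTail β m c j) := by
  induction n generalizing j with
  | zero => exact subClosed_singleton_zero (confluentTail_nonneg hβ.le hm hc j)
  | succ n ih =>
    have hone : SubClosed (digitValues β m n) 1 := hd ▸ ih le_rfl
    cases j with
    | zero => exact subClosed_digitValues_succ_intCast_div hβ hone hc
    | succ j =>
      exact subClosed_digitValues_succ_add_div hβ hone (confluentTail_nonneg hβ.le hm hc j)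
        (ih (Nat.le_of_succ_le hj))

theorem subClosed_digitValues_one (hβ : 0 < β) (hm : 0 ≤ m) (hc : 0 ≤ c) {d : ℕ}
    (h : β ^ (d + 1) = m * ∑ j ∈ Finset.range d, β ^ (j + 1) + c) (n : ℕ) :
    SubClosed (digitValues β m n) 1 := by
  have hd := confluentTail_eq_one hβ.ne' h
  exact hd ▸ subClosed_digitValues_confluentTail hβ hm hc hd le_rfl

theorem fract_mem_digitValues [FloorRing K] (hβ : 0 ≤ β) (hone : SubClosed (digitValues β m n) 1)
    {t : K} (ht : t ∈ digitValues β m n) : Int.fract t ∈ digitValues β m n :=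
  hone.intCast (Int.floor_nonneg.2 (nonneg_of_mem_digitValues hβ ht)) t ht (Int.floor_le t)

end Ordered

section Renyi

variable {β : ℝ} {m : ℤ} {n : ℕ}

theorem renyiT_intCast_add_div (hβ : β ≠ 0) (w : ℤ) (t : ℝ) :
    renyiT β ((w + t) / β) = Int.fract t := by
  rw [renyiT, mul_div_cancel₀ _ hβ, Int.self_sub_floor, Int.fract_intCast_add]

theorem iterate_renyiT_eq_zero (hβ : 0 < β) (hone : ∀ n, SubClosed (digitValues β m n) 1)
    {v : ℝ} (hv : v ∈ digitValues β m n) : (renyiT β)^[n] v = 0 := by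
  induction n generalizing v with
  | zero => exact hv
  | succ n ih =>
    obtain ⟨w, _, t, ht, rfl⟩ := hv
    rw [Function.iterate_succ_apply, renyiT_intCast_add_div hβ.ne']
    exact ih (fract_mem_digitValues hβ.le (hone n) ht)

theorem greedyDigit_eq_zero_of_iterate_eq_zero {y : ℝ} {k j : ℕ} (h : (renyiT β)^[k] y = 0)
    (hkj : k ≤ j) : greedyDigit β y j = 0 := by
  obtain ⟨i, rfl⟩ := Nat.exists_eq_add_of_le' hkj
  have hfix : (renyiT β)^[i] 0 = 0 := Function.iterate_fixed (by simp [renyiT]) i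
  simp [greedyDigit, Function.iterate_add_apply, h, hfix]

end Renyi

theorem confluent_finite_rep_greedy_finite_general
    {β : ℝ} (hβ : 0 < β) {d : ℕ} {m c : ℤ} (hm : 0 ≤ m) (hc : 0 ≤ c)
    (hconfluent : β ^ (d + 1) = m * ∑ j ∈ Finset.range d, β ^ (j + 1) + c)
    {k : ℕ} {y : ℕ → ℤ} (hy : ∀ j < k, y j ∈ Set.Icc 0 m) {j : ℕ} (hkj : k ≤ j) :
    greedyDigit β (∑ i ∈ Finset.range k, (y i : ℝ) / β ^ (i + 1)) j = 0 :=
  greedyDigit_eq_zero_of_iterate_eq_zero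
    (iterate_renyiT_eq_zero hβ (subClosed_digitValues_one hβ hm hc hconfluent)
      (sum_div_pow_mem_digitValues hy)) hkj

/-- Proposition on confluent bases, after Frougny: let `β > 1` be a
confluent Pisot number, i.e. `β^{d+1} = mβ^d + ⋯ + mβ + p + 1` for integers `d ≥ 1`,
`m ≥ 1`, `0 ≤ p < m`. If `y = ∑_{j=1}^k y_j/β^j ∈ [0,1)` with digits `y_j ∈ {0,…,m}`,
then the greedy digits `x_j` of `y` vanish for all `j > k`. -/
theorem confluent_finite_rep_greedy_finite
    (β : ℝ) (hβ : 1 < β)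
    (d : ℕ) (hd : 1 ≤ d) (m p : ℤ) (hm : 1 ≤ m) (hp : 0 ≤ p) (hpm : p < m)
    (hconfluent : β ^ (d + 1) = m * ∑ j ∈ Finset.range d, β ^ (j + 1) + p + 1)
    (k : ℕ) (hk : 1 ≤ k) (y : ℕ → ℤ) (hy : ∀ j, 0 ≤ y j ∧ y j ≤ m)
    (Y : ℝ) (hY : Y = ∑ j ∈ Finset.range k, (y j : ℝ) / β ^ (j + 1))
    (hY01 : Y ∈ Set.Ico (0 : ℝ) 1) :
    ∀ j : ℕ, k ≤ j → greedyDigit β Y j = 0 := by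
  intro j hkj
  rw [hY]
  exact confluent_finite_rep_greedy_finite_general (c := p + 1) (by linarith) (by lia) (by lia)
    (by push_cast; linarith) (fun i _ => hy i) hkj
end

section
/- Let β > 1 be a confluent Pisot number, i.e., suppose there exist integers d ≥ 1, m ≥ 1, p with 0 ≤ p < m such that β^{d+1} = m β^d + m β^{d−1} + ⋯ + m β + p + 1 (so m = ⌊β⌋), and let A = {0,1,…,m}. Then for every x ∈ [0,1) the greedy (Rényi) representation of x is an optimal (β,A)-representation; in particular every x ∈ [0,1) has an optimal representation. Explicitly: if (x_j) are the greedy digits of x, then for every sequence (b_j) with b_j ∈ A and x = Σ_{j=1}^∞ b_j/β^j, and for every n ≥ 1, one has 0 ≤ x − Σ_{j=1}^n x_j/β^j ≤ x − Σ_{j=1}^n b_j/β^j. -/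
/-!
Let `X_k` be the set of values `∑_{i<k} a_i β^i` of words with digits in `{0, …, m}`. The confluence
equation says that `1` has the `β`-expansion `0.m⋯m(p+1)`. The heart of the matter is that `X_k` is
then closed under subtracting `β^k`, as long as the result stays nonnegative. This is proved by
induction on `k`, simultaneously for subtracting `t β^k` where `t` runs over the tails
`0.m⋯m(p+1)` of that expansion: the leading digit of `t` is borrowed from the leading digit of the
word, which leaves the problem of subtracting the next tail from a word of length `k - 1`.

Write `T` for the Rényi map. Given a word of length `n` and value `v ≤ β^n x`, such subtractions
raise its leading digit to `⌊βx⌋` at the expense of the remaining digits without changing `v`,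
unless `v` is already below `⌊βx⌋ β^(n-1)`, hence below the value `β^n x - T^n x` of the greedy
word of length `n`. Repeating this along the word shows that `v` never exceeds that value.
-/

/-- `w` can be subtracted within `X` from every element of `X` that is at least `w`. For `X` the
values of words of length `k` and `w = β ^ k` this is the arithmetic property of confluent bases
that makes greedy expansions optimal. -/
def IsSubtractable {G : Type*} [Sub G] [LE G] (X : Set G) (w : G) : Prop :=
  ∀ v ∈ X, w ≤ v → v - w ∈ X

namespace IsSubtractable

variable {G : Type*} [AddCommGroup G] [PartialOrder G] [IsOrderedAddMonoid G] {X : Set G} {w : G}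

theorem nsmul (hX : IsSubtractable X w) (hw : 0 ≤ w) (n : ℕ) : IsSubtractable X (n • w) := by
  induction n with
  | zero => intro v hv _; simpa using hv
  | succ n ih =>
    intro v hv hle
    rw [succ_nsmul] at hle ⊢
    rw [← sub_sub]
    have hnw : n • w ≤ v := (le_add_of_nonneg_right hw).trans hle
    exact hX _ (ih v hv hnw) (le_sub_iff_add_le'.2 hle)

theorem zsmul (hX : IsSubtractable X w) (hw : 0 ≤ w) {q : ℤ} (hq : 0 ≤ q) :
    IsSubtractable X (q • w) := by
  lift q to ℕ using hq
  simpa only [natCast_zsmul] using hX.nsmul hw q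

end IsSubtractable

/-- The values `∑_{i<k} a_i β^i` of words of length `k` with integer digits `0 ≤ a_i ≤ m`, built by
prepending leading digits. These are the numerators of `k`-digit partial sums of expansions. -/
def wordValues (β : ℝ) (m : ℤ) : ℕ → Set ℝ
  | 0 => {0}
  | k + 1 => {v | ∃ a ∈ Set.Icc 0 m, ∃ s ∈ wordValues β m k, v = a * β ^ k + s}

/-- The number `0.m⋯mc` in base `β`, with `i` digits `m` before the final digit `c`. For a confluent
base and `c = p + 1`, these are the tails of the expansion of `1`, which is the one with `i = d`. -/
noncomputable def expansionTail (β : ℝ) (m c : ℤ) : ℕ → ℝ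
  | 0 => c / β
  | i + 1 => (m + expansionTail β m c i) / β

section Words

variable {β : ℝ} {m : ℤ}

theorem nonneg_of_mem_digitSet {a : ℝ} (ha : a ∈ digitSet m) : 0 ≤ a := by
  obtain ⟨k, hk, rfl⟩ := ha
  exact Int.cast_nonneg hk.1

theorem zero_mem_wordValues (hm : 0 ≤ m) (k : ℕ) : 0 ∈ wordValues β m k := by
  induction k with
  | zero => rfl
  | succ k ih => exact ⟨0, ⟨le_rfl, hm⟩, 0, ih, by simp⟩

theorem nonneg_of_mem_wordValues (hβ : 0 ≤ β) {k : ℕ} {v : ℝ} (hv : v ∈ wordValues β m k) :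
    0 ≤ v := by
  induction k generalizing v with
  | zero => exact (Set.mem_singleton_iff.1 hv).ge
  | succ k ih =>
    obtain ⟨a, ha, s, hs, rfl⟩ := hv
    have ha₀ : (0 : ℝ) ≤ a := Int.cast_nonneg ha.1
    have hs₀ : 0 ≤ s := ih hs
    positivity

theorem pow_mul_sum_mem_wordValues (hβ : β ≠ 0) (n : ℕ) {b : ℕ → ℝ}
    (hb : ∀ i, b i ∈ digitSet m) :
    β ^ n * ∑ j ∈ Finset.range n, b j / β ^ (j + 1) ∈ wordValues β m n := by
  induction n generalizing b with
  | zero => simp [wordValues]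
  | succ n ih =>
    obtain ⟨a, ha, hab⟩ := hb 0
    refine ⟨a, ha, _, ih fun i => hb (i + 1), ?_⟩
    rw [Finset.sum_range_succ', mul_add, add_comm, Finset.mul_sum, Finset.mul_sum, ← hab]
    congr 1
    · field_simp; ring
    · exact Finset.sum_congr rfl fun j _ => by field_simp; ring

theorem isSubtractable_wordValues_zero {w : ℝ} (hw : 0 ≤ w) :
    IsSubtractable (wordValues β m 0) w := by
  intro v hv hle
  have hv₀ : v = 0 := hv
  exact (by linarith : v - w = 0)

theorem isSubtractable_wordValues_succ_digit {k : ℕ} (hβ : 0 ≤ β)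
    (hpow : IsSubtractable (wordValues β m k) (β ^ k)) {c : ℤ} (hc : 0 ≤ c) :
    IsSubtractable (wordValues β m (k + 1)) (c * β ^ k) := by
  rintro _ ⟨a, ⟨ha₀, ham⟩, s, hs, rfl⟩ hle
  obtain hca | hac := le_total c a
  · exact ⟨a - c, ⟨by lia, by lia⟩, s, hs, by push_cast; ring⟩
  · have hborrow := hpow.zsmul (pow_nonneg hβ k) (sub_nonneg.2 hac) s hs
      (by rw [zsmul_eq_mul]; push_cast; linarith)
    exact ⟨0, ⟨le_rfl, ha₀.trans ham⟩, _, hborrow, by rw [zsmul_eq_mul]; push_cast; ring⟩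

theorem isSubtractable_wordValues_succ_add {k : ℕ} (hβ : 0 ≤ β)
    (hpow : IsSubtractable (wordValues β m k) (β ^ k)) {w : ℝ} (hw : 0 ≤ w)
    (hsub : IsSubtractable (wordValues β m k) w) :
    IsSubtractable (wordValues β m (k + 1)) (m * β ^ k + w) := by
  rintro _ ⟨a, ⟨ha₀, ham⟩, s, hs, rfl⟩ hle
  have hborrow := hpow.zsmul (pow_nonneg hβ k) (sub_nonneg.2 ham) s hs
    (by rw [zsmul_eq_mul]; push_cast; linarith)
  have hrest := hsub _ hborrow (by rw [zsmul_eq_mul]; push_cast; linarith)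
  exact ⟨0, ⟨le_rfl, ha₀.trans ham⟩, _, hrest, by rw [zsmul_eq_mul]; push_cast; ring⟩

end Words

section Confluence

variable {β : ℝ} {m c : ℤ} {d : ℕ}

theorem expansionTail_nonneg (hβ : 0 ≤ β) (hm : 0 ≤ m) (hc : 0 ≤ c) (i : ℕ) :
    0 ≤ expansionTail β m c i := by
  have hm' : (0 : ℝ) ≤ m := Int.cast_nonneg hm
  have hc' : (0 : ℝ) ≤ c := Int.cast_nonneg hc
  induction i with
  | zero => exact div_nonneg hc' hβ
  | succ i ih => exact div_nonneg (add_nonneg hm' ih) hβ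

theorem pow_mul_expansionTail (hβ : β ≠ 0) (i : ℕ) :
    β ^ (i + 1) * expansionTail β m c i = m * ∑ j ∈ Finset.range i, β ^ (j + 1) + c := by
  induction i with
  | zero => simp [expansionTail, mul_div_cancel₀ _ hβ]
  | succ i ih =>
    calc β ^ (i + 1 + 1) * expansionTail β m c (i + 1)
        = m * β ^ (i + 1) + β ^ (i + 1) * expansionTail β m c i := by
          simp only [expansionTail]; field_simp; ring
      _ = m * ∑ j ∈ Finset.range (i + 1), β ^ (j + 1) + c := by
          rw [ih, Finset.sum_range_succ]; ring

theorem expansionTail_eq_one (hβ : β ≠ 0)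
    (hconfluent : β ^ (d + 1) = m * ∑ j ∈ Finset.range d, β ^ (j + 1) + c) :
    expansionTail β m c d = 1 := by
  rw [← pow_mul_expansionTail hβ] at hconfluent
  exact (left_eq_mul₀ (pow_ne_zero _ hβ)).1 hconfluent

theorem isSubtractable_expansionTail_mul_pow (hβ : 0 < β) (hm : 0 ≤ m) (hc : 0 ≤ c)
    (hone : expansionTail β m c d = 1) (k i : ℕ) :
    IsSubtractable (wordValues β m k) (expansionTail β m c i * β ^ k) := by
  have hnonneg (k i : ℕ) : 0 ≤ expansionTail β m c i * β ^ k :=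
    mul_nonneg (expansionTail_nonneg hβ.le hm hc i) (by positivity)
  induction k generalizing i with
  | zero => exact isSubtractable_wordValues_zero (hnonneg 0 i)
  | succ k ih =>
    have hpow : IsSubtractable (wordValues β m k) (β ^ k) := by simpa [hone] using ih d
    cases i with
    | zero =>
      have hshift : expansionTail β m c 0 * β ^ (k + 1) = c * β ^ k := by
        simp only [expansionTail]; field_simp; ring
      rw [hshift]
      exact isSubtractable_wordValues_succ_digit hβ.le hpow hc
    | succ i =>
      have hshift : expansionTail β m c (i + 1) * β ^ (k + 1) =
          m * β ^ k + expansionTail β m c i * β ^ k := by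
        simp only [expansionTail]; field_simp; ring
      rw [hshift]
      exact isSubtractable_wordValues_succ_add hβ.le hpow (hnonneg k i) (ih i)

theorem isSubtractable_pow_of_confluent (hβ : 0 < β) (hm : 0 ≤ m) (hc : 0 ≤ c)
    (hconfluent : β ^ (d + 1) = m * ∑ j ∈ Finset.range d, β ^ (j + 1) + c) (k : ℕ) :
    IsSubtractable (wordValues β m k) (β ^ k) := by
  have hone := expansionTail_eq_one hβ.ne' hconfluent
  simpa [hone] using isSubtractable_expansionTail_mul_pow hβ hm hc hone k d

theorem le_add_one_of_confluent (hβ : 0 < β) (hc : c ≤ m + 1)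
    (hconfluent : β ^ (d + 1) = m * ∑ j ∈ Finset.range d, β ^ (j + 1) + c) :
    β ≤ m + 1 := by
  have hc' : (c : ℝ) ≤ m + 1 := by exact_mod_cast hc
  have hgeom : 0 < ∑ j ∈ Finset.range (d + 1), β ^ j :=
    Finset.sum_pos (fun j _ => pow_pos hβ j) Finset.nonempty_range_add_one
  have hmul : (β - 1) * ∑ j ∈ Finset.range (d + 1), β ^ j ≤
      m * ∑ j ∈ Finset.range (d + 1), β ^ j := by
    rw [mul_geom_sum, Finset.sum_range_succ', hconfluent]
    linarith
  linarith [le_of_mul_le_mul_right hmul hgeom]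

end Confluence

section Greedy

variable {β x : ℝ} {m : ℤ}

theorem renyiT_mem_Ico (β z : ℝ) : renyiT β z ∈ Set.Ico (0 : ℝ) 1 :=
  ⟨Int.fract_nonneg _, Int.fract_lt_one _⟩

theorem iterate_renyiT_mem_Ico (β : ℝ) (hx : x ∈ Set.Ico (0 : ℝ) 1) (n : ℕ) :
    (renyiT β)^[n] x ∈ Set.Ico (0 : ℝ) 1 :=
  Set.MapsTo.iterate (fun z _ => renyiT_mem_Ico β z) n hx

theorem greedyDigit_nonneg (hβ : 0 ≤ β) (hx : x ∈ Set.Ico (0 : ℝ) 1) (j : ℕ) :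
    0 ≤ greedyDigit β x j :=
  Int.floor_nonneg.2 (mul_nonneg hβ (iterate_renyiT_mem_Ico β hx j).1)

theorem greedyDigit_mem_digitSet (hβ : 0 < β) (hβm : β ≤ m + 1) (hx : x ∈ Set.Ico (0 : ℝ) 1)
    (j : ℕ) : (greedyDigit β x j : ℝ) ∈ digitSet m := by
  have hlt : β * (renyiT β)^[j] x < (m + 1 : ℤ) := by
    push_cast
    exact (mul_lt_of_lt_one_right hβ (iterate_renyiT_mem_Ico β hx j).2).trans_le hβm
  exact ⟨_, ⟨greedyDigit_nonneg hβ.le hx j, Int.lt_add_one_iff.1 (Int.floor_lt.2 hlt)⟩, rfl⟩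

theorem sum_greedyDigit (hβ : β ≠ 0) (x : ℝ) (n : ℕ) :
    ∑ j ∈ Finset.range n, (greedyDigit β x j : ℝ) / β ^ (j + 1) =
      x - (renyiT β)^[n] x / β ^ n := by
  induction n with
  | zero => simp
  | succ n ih =>
    rw [Finset.sum_range_succ, ih, Function.iterate_succ_apply', greedyDigit, renyiT]
    field_simp
    ring

theorem tendsto_iterate_renyiT_div_pow (hβ : 1 < β) (hx : x ∈ Set.Ico (0 : ℝ) 1) :
    Filter.Tendsto (fun n => (renyiT β)^[n] x / β ^ n) Filter.atTop (nhds 0) := by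
  refine squeeze_zero (g := fun n => β⁻¹ ^ n) (fun n => ?_) (fun n => ?_)
    (tendsto_pow_atTop_nhds_zero_of_lt_one (by positivity) (inv_lt_one_of_one_lt₀ hβ))
  · exact div_nonneg (iterate_renyiT_mem_Ico β hx n).1 (by positivity)
  · rw [inv_pow, ← one_div]
    gcongr
    exact (iterate_renyiT_mem_Ico β hx n).2.le

theorem hasSum_greedyDigit (hβ : 1 < β) (hx : x ∈ Set.Ico (0 : ℝ) 1) :
    HasSum (fun j => (greedyDigit β x j : ℝ) / β ^ (j + 1)) x := by
  have hβ₀ : 0 < β := zero_lt_one.trans hβ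
  have hterm (j : ℕ) : 0 ≤ (greedyDigit β x j : ℝ) / β ^ (j + 1) :=
    div_nonneg (Int.cast_nonneg (greedyDigit_nonneg hβ₀.le hx j)) (by positivity)
  rw [hasSum_iff_tendsto_nat_of_nonneg hterm]
  simpa only [sum_greedyDigit hβ₀.ne', sub_zero] using
    (tendsto_iterate_renyiT_div_pow hβ hx).const_sub x

theorem isRep_greedyDigit (hβ : 1 < β) (hβm : β ≤ m + 1) (hx : x ∈ Set.Ico (0 : ℝ) 1) :
    IsRep β (digitSet m) (fun j => (greedyDigit β x j : ℝ)) x :=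
  ⟨greedyDigit_mem_digitSet (zero_lt_one.trans hβ) hβm hx, hasSum_greedyDigit hβ hx⟩

end Greedy

theorem IsRep.sum_range_le {γ x : ℝ} {B : Set ℝ} {b : ℕ → ℝ} (hb : IsRep γ B b x) (hγ : 0 ≤ γ)
    (hB : ∀ a ∈ B, 0 ≤ a) (n : ℕ) : ∑ j ∈ Finset.range n, b j / γ ^ (j + 1) ≤ x :=
  sum_le_hasSum _ (fun j _ => div_nonneg (hB _ (hb.1 j)) (by positivity)) hb.2

section Optimality

variable {β : ℝ} {m : ℤ}

theorem le_pow_mul_sub_iterate_renyiT (hβ : 0 < β)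
    (hsub : ∀ k, IsSubtractable (wordValues β m k) (β ^ k)) {n : ℕ} {v x : ℝ}
    (hv : v ∈ wordValues β m n) (hvx : v ≤ β ^ n * x) :
    v ≤ β ^ n * x - (renyiT β)^[n] x := by
  induction n generalizing v x with
  | zero =>
    have hv₀ : v = 0 := hv
    simp [hv₀]
  | succ n ih =>
    obtain ⟨a, ha, s, hs, rfl⟩ := hv
    have hpow : 0 < β ^ n := pow_pos hβ n
    have hsplit : β ^ (n + 1) * x = ⌊β * x⌋ * β ^ n + β ^ n * renyiT β x := by
      rw [renyiT]; ring
    obtain hdeficit | hdeficit := le_or_gt ((⌊β * x⌋ - a : ℤ) • β ^ n) s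
    · have ha_floor : a ≤ ⌊β * x⌋ := by
        have hs₀ : 0 ≤ s := nonneg_of_mem_wordValues hβ.le hs
        refine Int.le_floor.2 (le_of_mul_le_mul_right ?_ hpow)
        calc (a : ℝ) * β ^ n ≤ a * β ^ n + s := le_add_of_nonneg_right hs₀
          _ ≤ β ^ (n + 1) * x := hvx
          _ = β * x * β ^ n := by ring
      have hmem := (hsub n).zsmul hpow.le (sub_nonneg.2 ha_floor) s hs hdeficit
      rw [zsmul_eq_mul] at hmem
      push_cast at hmem
      have hrest := ih (x := renyiT β x) hmem (by linarith)
      rw [Function.iterate_succ_apply]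
      linarith
    · have hzero := ih (zero_mem_wordValues (ha.1.trans ha.2) n)
        (mul_nonneg hpow.le (renyiT_mem_Ico β x).1)
      rw [zsmul_eq_mul] at hdeficit
      push_cast at hdeficit
      rw [Function.iterate_succ_apply]
      linarith

theorem sum_range_le_sum_greedyDigit (hβ : 0 < β)
    (hsub : ∀ k, IsSubtractable (wordValues β m k) (β ^ k)) {b : ℕ → ℝ}
    (hb : ∀ i, b i ∈ digitSet m) {n : ℕ} {x : ℝ}
    (hbx : ∑ j ∈ Finset.range n, b j / β ^ (j + 1) ≤ x) :
    ∑ j ∈ Finset.range n, b j / β ^ (j + 1) ≤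
      ∑ j ∈ Finset.range n, (greedyDigit β x j : ℝ) / β ^ (j + 1) := by
  have hpow : 0 < β ^ n := pow_pos hβ n
  refine le_of_mul_le_mul_left ?_ hpow
  calc β ^ n * ∑ j ∈ Finset.range n, b j / β ^ (j + 1)
      ≤ β ^ n * x - (renyiT β)^[n] x :=
        le_pow_mul_sub_iterate_renyiT hβ hsub (pow_mul_sum_mem_wordValues hβ.ne' n hb)
          (mul_le_mul_of_nonneg_left hbx hpow.le)
    _ = β ^ n * ∑ j ∈ Finset.range n, (greedyDigit β x j : ℝ) / β ^ (j + 1) := by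
        rw [sum_greedyDigit hβ.ne', mul_sub, mul_div_cancel₀ _ hpow.ne']

end Optimality

/-- Proposition A: let `β > 1` be a confluent Pisot number, i.e.
`β^{d+1} = mβ^d + ⋯ + mβ + p + 1` with integers `d ≥ 1`, `m ≥ 1`, `0 ≤ p < m`, and
`A = {0,1,…,m}`. Then for every `x ∈ [0,1)` the greedy representation of `x` is an
optimal `(β,A)`-representation: it is a `(β,A)`-representation, and for every
`(β,A)`-representation `(b_j)` of `x` and every `n ≥ 1`,
`0 ≤ x − ∑_{j=1}^n x_j/β^j ≤ x − ∑_{j=1}^n b_j/β^j`. -/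
theorem confluent_greedy_is_optimal
    (β : ℝ) (hβ : 1 < β)
    (d : ℕ) (hd : 1 ≤ d) (m p : ℤ) (hm : 1 ≤ m) (hp : 0 ≤ p) (hpm : p < m)
    (hconfluent : β ^ (d + 1) = m * ∑ j ∈ Finset.range d, β ^ (j + 1) + p + 1) :
    ∀ x ∈ Set.Ico (0 : ℝ) 1,
      IsRep β (digitSet m) (fun j => (greedyDigit β x j : ℝ)) x ∧
      ∀ b : ℕ → ℝ, IsRep β (digitSet m) b x → ∀ n : ℕ, 1 ≤ n →
        0 ≤ x - ∑ j ∈ Finset.range n, (greedyDigit β x j : ℝ) / β ^ (j + 1) ∧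
        x - ∑ j ∈ Finset.range n, (greedyDigit β x j : ℝ) / β ^ (j + 1) ≤
          x - ∑ j ∈ Finset.range n, b j / β ^ (j + 1) := by
  intro x hx
  have hβ₀ : 0 < β := zero_lt_one.trans hβ
  have hexp : β ^ (d + 1) = m * ∑ j ∈ Finset.range d, β ^ (j + 1) + (p + 1 : ℤ) := by
    rw [hconfluent, Int.cast_add, Int.cast_one, add_assoc]
  have hgreedy : IsRep β (digitSet m) (fun j => (greedyDigit β x j : ℝ)) x :=
    isRep_greedyDigit hβ (le_add_one_of_confluent hβ₀ (by lia) hexp) hx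
  have hsub := isSubtractable_pow_of_confluent hβ₀ (zero_le_one.trans hm) (by lia) hexp
  refine ⟨hgreedy, fun b hb n _ => ⟨?_, ?_⟩⟩
  · exact sub_nonneg.2 (hgreedy.sum_range_le hβ₀.le (fun _ => nonneg_of_mem_digitSet) n)
  · have hbx := hb.sum_range_le hβ₀.le (fun _ => nonneg_of_mem_digitSet) n
    exact sub_le_sub_left (sum_range_le_sum_greedyDigit hβ₀ hsub hb.1 hbx) x
end
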